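/- arXiv:2505.01874 — 6 statements merged into one kernel-verified Lean document; each statement's English description precedes it below -/
import Mathlib

section
/- Let d ≥ 1 and let f : ℝ^d → ℝ be differentiable with L-Lipschitz-continuous gradient, where L ≥ 0. Then for every step size γ ≥ 0 and all vectors θ, m, δ ∈ ℝ^d, setting θ' := θ − γ(m + δ), one has f(θ') − f(θ) ≤ −(γ/2)(1 − 4γL)‖∇f(θ)‖² + γ(1 + 2γL)‖m − ∇f(θ)‖² + γ(1 + γL)‖δ‖². -/
open scoped RealInnerProductSpace

/-- The quadratic upper bound for a function with Lipschitz gradient. -/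
theorem quad_bound {E : Type*} [NormedAddCommGroup E] [InnerProductSpace ℝ E] [CompleteSpace E]
    (f : E → ℝ) (L : ℝ) (hdiff : Differentiable ℝ f)
    (hlip : ∀ x y : E, ‖gradient f x - gradient f y‖ ≤ L * ‖x - y‖) (x v : E) :
    f (x + v) ≤ f x + inner ℝ (gradient f x) v + L / 2 * ‖v‖ ^ 2 := by
  have hF : ∀ t : ℝ, HasDerivAt (fun t : ℝ => f (x + t • v))
      (inner ℝ (gradient f (x + t • v)) v) t := by
    intro t
    have h1 : HasDerivAt (fun t : ℝ => x + t • v) v t := by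
      simpa using ((hasDerivAt_id t).smul_const v).const_add x
    have h2 := (hdiff (x + t • v)).hasGradientAt.hasFDerivAt
    simpa [Function.comp_def] using h2.comp_hasDerivAt t h1
  have hB : ∀ t : ℝ, HasDerivAt
      (fun t : ℝ => f x + t * inner ℝ (gradient f x) v + L / 2 * ‖v‖ ^ 2 * t ^ 2)
      (inner ℝ (gradient f x) v + L * ‖v‖ ^ 2 * t) t := by
    intro t
    have h1 := (((hasDerivAt_id t).mul_const (inner ℝ (gradient f x) v)).const_add (f x)).add
      (((hasDerivAt_id t).pow 2).const_mul (L / 2 * ‖v‖ ^ 2))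
    refine h1.congr_deriv ?_
    simp
    ring
  have key := image_le_of_deriv_right_le_deriv_boundary (a := 0) (b := 1)
    (fun t _ => (hF t).continuousAt.continuousWithinAt)
    (fun t _ => (hF t).hasDerivWithinAt) (by simp)
    (fun t _ => (hB t).continuousAt.continuousWithinAt)
    (fun t _ => (hB t).hasDerivWithinAt)
    (by
      intro t ht
      have h1 := real_inner_le_norm (gradient f (x + t • v) - gradient f x) v
      have h2 := hlip (x + t • v) x
      rw [add_sub_cancel_left, norm_smul, Real.norm_of_nonneg ht.1] at h2
      have h3 := mul_le_mul_of_nonneg_right h2 (norm_nonneg v)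
      rw [inner_sub_left] at h1
      nlinarith)
    (Set.right_mem_Icc.2 zero_le_one)
  simpa using key

/-- Descent bound (Lemma "descent" of the CafCor analysis): one step of momentum SGD with
perturbation `δ` on an `L`-smooth function. -/
theorem stmt_0 (d : ℕ) (hd : 1 ≤ d) (f : EuclideanSpace ℝ (Fin d) → ℝ) (L : ℝ) (hL : 0 ≤ L)
    (hdiff : Differentiable ℝ f)
    (hlip : ∀ x y : EuclideanSpace ℝ (Fin d), ‖gradient f x - gradient f y‖ ≤ L * ‖x - y‖)
    (γ : ℝ) (hγ : 0 ≤ γ) (θ m δ : EuclideanSpace ℝ (Fin d)) :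
    f (θ - γ • (m + δ)) - f θ ≤
      -(γ / 2) * (1 - 4 * γ * L) * ‖gradient f θ‖ ^ 2
        + γ * (1 + 2 * γ * L) * ‖m - gradient f θ‖ ^ 2
        + γ * (1 + γ * L) * ‖δ‖ ^ 2 := by
  obtain ⟨e, rfl⟩ : ∃ e, m = gradient f θ + e := ⟨m - gradient f θ, by abel⟩
  have hq := quad_bound f L hdiff hlip θ (-(γ • (gradient f θ + e + δ)))
  rw [← sub_eq_add_neg, norm_neg, norm_smul, Real.norm_of_nonneg hγ, inner_neg_right,
    inner_smul_right] at hq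
  rw [add_sub_cancel_left]
  generalize gradient f θ = g at *
  have a1 := norm_add_sq_real (g + e) δ
  have a2 := norm_add_sq_real g e
  have a3 := norm_sub_sq_real (g + e) δ
  have a4 := norm_sub_sq_real g e
  have b1 := norm_add_sq_real g ((2 : ℝ) • e)
  have b2 := norm_add_sq_real g ((2 : ℝ) • δ)
  rw [norm_smul, inner_smul_right, Real.norm_of_nonneg zero_le_two] at b1 b2
  have c : ‖g + e + δ‖ ^ 2 ≤ 4 * ‖g‖ ^ 2 + 4 * ‖e‖ ^ 2 + 2 * ‖δ‖ ^ 2 := by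
    nlinarith [sq_nonneg ‖g + e - δ‖, sq_nonneg ‖g - e‖]
  have k : -inner ℝ g (g + e + δ) ≤ -(1 / 2) * ‖g‖ ^ 2 + ‖e‖ ^ 2 + ‖δ‖ ^ 2 := by
    rw [inner_add_right, inner_add_right, real_inner_self_eq_norm_sq]
    nlinarith [sq_nonneg ‖g + (2 : ℝ) • e‖, sq_nonneg ‖g + (2 : ℝ) • δ‖]
  have c' := mul_le_mul_of_nonneg_left c (by positivity : 0 ≤ L / 2 * γ ^ 2)
  have k' := mul_le_mul_of_nonneg_left k hγ
  rw [mul_pow] at hq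
  linarith
end

section
/- Let d ≥ 1, let M be a random real symmetric d × d matrix that is almost surely positive semidefinite, and let g : ℝ → ℝ be a nonnegative, nondecreasing, measurable function. Then E[ sup_{‖v‖ ≤ 1} g(⟨v, Mv⟩) ] ≤ 9^d · sup_{‖v‖ ≤ 1} E[ g(2⟨v, Mv⟩) ], where both sides are interpreted as values in [0, ∞]. -/
open MeasureTheory
open scoped RealInnerProductSpace ENNReal

noncomputable instance (d : ℕ) : MeasurableSpace (Matrix (Fin d) (Fin d) ℝ) :=
  show MeasurableSpace (Fin d → Fin d → ℝ) from inferInstance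

open Metric Module in
theorem aux_card_le {E : Type*} [NormedAddCommGroup E] [NormedSpace ℝ E] [FiniteDimensional ℝ E]
    (s : Finset E) (hs : ∀ c ∈ s, ‖c‖ ≤ 1)
    (h : ∀ c ∈ s, ∀ d ∈ s, c ≠ d → 1 / 4 ≤ ‖c - d‖) : s.card ≤ 9 ^ finrank ℝ E := by
  borelize E
  let μ : Measure E := Measure.addHaar
  let δ : ℝ := (1 : ℝ) / 8
  let ρ : ℝ := (9 : ℝ) / 8
  have ρpos : 0 < ρ := by norm_num [ρ]
  have δpos : 0 < δ := by norm_num [δ]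
  set A := ⋃ c ∈ s, ball (c : E) δ with hA
  have D : Set.Pairwise (s : Set E) (Function.onFun Disjoint fun c => ball (c : E) δ) := by
    rintro c hc d hd hcd
    apply ball_disjoint_ball
    rw [dist_eq_norm]
    have := h c hc d hd hcd
    simp only [δ]
    linarith
  have A_subset : A ⊆ ball (0 : E) ρ := by
    refine Set.iUnion₂_subset fun x hx => ?_
    apply ball_subset_ball'
    rw [dist_zero_right]
    have := hs x hx
    simp only [δ, ρ]
    linarith
  have I :
    (s.card : ℝ≥0∞) * ENNReal.ofReal (δ ^ finrank ℝ E) * μ (ball 0 1) ≤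
      ENNReal.ofReal (ρ ^ finrank ℝ E) * μ (ball 0 1) :=
    calc
      (s.card : ℝ≥0∞) * ENNReal.ofReal (δ ^ finrank ℝ E) * μ (ball 0 1) = μ A := by
        rw [hA, measure_biUnion_finset D fun c _ => measurableSet_ball]
        simp only [μ.addHaar_ball_of_pos _ δpos]
        simp only [Finset.sum_const, nsmul_eq_mul, mul_assoc]
      _ ≤ μ (ball (0 : E) ρ) := measure_mono A_subset
      _ = ENNReal.ofReal (ρ ^ finrank ℝ E) * μ (ball 0 1) := by
        simp only [μ.addHaar_ball_of_pos _ ρpos]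
  have J : (s.card : ℝ≥0∞) * ENNReal.ofReal (δ ^ finrank ℝ E) ≤ ENNReal.ofReal (ρ ^ finrank ℝ E) :=
    (ENNReal.mul_le_mul_iff_left (measure_ball_pos _ _ zero_lt_one).ne' measure_ball_lt_top.ne).1 I
  have K : (s.card : ℝ) ≤ (9 : ℝ) ^ finrank ℝ E := by
    have := ENNReal.toReal_le_of_le_ofReal (pow_nonneg ρpos.le _) J
    simpa [ρ, δ, div_eq_mul_inv, mul_pow] using this
  exact mod_cast K

open Module in
theorem aux_net {E : Type*} [NormedAddCommGroup E] [NormedSpace ℝ E] [FiniteDimensional ℝ E] :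
    ∃ s : Finset E, s.card ≤ 9 ^ finrank ℝ E ∧ (∀ c ∈ s, ‖c‖ ≤ 1) ∧
      ∀ v : E, ‖v‖ ≤ 1 → ∃ u ∈ s, ‖v - u‖ ≤ 1 / 4 := by
  classical
  let p : ℕ → Prop := fun n => ∃ s : Finset E, s.card = n ∧ (∀ c ∈ s, ‖c‖ ≤ 1) ∧
    ∀ c ∈ s, ∀ d ∈ s, c ≠ d → 1 / 4 ≤ ‖c - d‖
  have hp0 : p 0 := ⟨∅, by simp⟩
  obtain ⟨s, hs, h1, h2⟩ : p (Nat.findGreatest p (9 ^ finrank ℝ E)) :=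
    Nat.findGreatest_spec (Nat.zero_le _) hp0
  refine ⟨s, aux_card_le s h1 h2, h1, fun v hv => ?_⟩
  by_contra! hcon
  have hvs : v ∉ s := fun hvs => by
    have := hcon v hvs
    simp at this
    linarith
  have h1' : ∀ c ∈ insert v s, ‖c‖ ≤ 1 := by
    intro c hc
    rcases Finset.mem_insert.1 hc with rfl | hc
    · exact hv
    · exact h1 c hc
  have h2' : ∀ c ∈ insert v s, ∀ d ∈ insert v s, c ≠ d → 1 / 4 ≤ ‖c - d‖ := by
    intro c hc d hd hcd
    rcases Finset.mem_insert.1 hc with hc' | hc' <;> rcases Finset.mem_insert.1 hd with hd' | hd'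
    · exact absurd (hc'.trans hd'.symm) hcd
    · rw [hc']; exact (hcon d hd').le
    · rw [hd', norm_sub_rev]; exact (hcon c hc').le
    · exact h2 c hc' d hd' hcd
  have hle := Nat.le_findGreatest (P := p) (aux_card_le _ h1' h2') ⟨_, rfl, h1', h2'⟩
  rw [Finset.card_insert_of_notMem hvs, ← hs] at hle
  omega

theorem aux_quad {d : ℕ} (A : Matrix (Fin d) (Fin d) ℝ) (hA : A.PosSemidef)
    (s : Finset (EuclideanSpace ℝ (Fin d)))
    (hs : ∀ v : EuclideanSpace ℝ (Fin d), ‖v‖ ≤ 1 → ∃ u ∈ s, ‖v - u‖ ≤ 1 / 4) :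
    ∃ u ∈ s, ∀ v : EuclideanSpace ℝ (Fin d), ‖v‖ ≤ 1 →
      ⟪v, Matrix.toEuclideanLin A v⟫ ≤ 2 * ⟪u, Matrix.toEuclideanLin A u⟫ := by
  set T := Matrix.toEuclideanLin A with hT
  have hpos : ∀ x, 0 ≤ ⟪x, T x⟫ := by
    intro x
    have h := (Matrix.isPositive_toEuclideanLin_iff.2 hA).inner_nonneg_right x
    simpa using h
  have hcont : Continuous fun v : EuclideanSpace ℝ (Fin d) => ⟪v, T v⟫ :=
    continuous_id.inner (LinearMap.continuous_of_finiteDimensional T)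
  obtain ⟨v, hv, hmax⟩ := (isCompact_closedBall (0 : EuclideanSpace ℝ (Fin d)) 1).exists_isMaxOn
    ⟨0, by simp⟩ hcont.continuousOn
  have hmax' : ∀ w : EuclideanSpace ℝ (Fin d), ‖w‖ ≤ 1 → ⟪w, T w⟫ ≤ ⟪v, T v⟫ :=
    fun w hw => hmax (by simpa using hw)
  obtain ⟨u, hu, huv⟩ := hs v (by simpa using hv)
  refine ⟨u, hu, fun w hw => (hmax' w hw).trans ?_⟩
  have h1 := hmax' ((4 : ℝ) • (v - u)) (by rw [norm_smul]; norm_num; linarith)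
  have h2 := hpos (u - (3 : ℝ) • (v - u))
  have h3 := hpos v
  simp only [map_sub, map_smul, inner_sub_left, inner_sub_right, inner_smul_left,
    inner_smul_right, RCLike.conj_to_real] at h1 h2
  linarith

/-- Covering argument for expected suprema of quadratic forms of a random symmetric
(almost surely positive semidefinite) matrix, composed with a nonnegative nondecreasing
function `g` (values interpreted in `[0, ∞]`). -/
theorem stmt_2 {Ω : Type*} [MeasurableSpace Ω] (P : Measure Ω) [IsProbabilityMeasure P]
    (d : ℕ) (hd : 1 ≤ d) (M : Ω → Matrix (Fin d) (Fin d) ℝ) (hMmeas : Measurable M)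
    (hpsd : ∀ᵐ ω ∂P, (M ω).PosSemidef)
    (g : ℝ → ℝ) (hg0 : ∀ x, 0 ≤ g x) (hgmono : Monotone g) (hgmeas : Measurable g) :
    (∫⁻ ω, ⨆ v : Metric.closedBall (0 : EuclideanSpace ℝ (Fin d)) 1,
        ENNReal.ofReal
          (g ⟪(v : EuclideanSpace ℝ (Fin d)), Matrix.toEuclideanLin (M ω) v⟫) ∂P)
      ≤ (9 : ℝ≥0∞) ^ d *
        ⨆ v : Metric.closedBall (0 : EuclideanSpace ℝ (Fin d)) 1,
          ∫⁻ ω, ENNReal.ofReal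
            (g (2 * ⟪(v : EuclideanSpace ℝ (Fin d)), Matrix.toEuclideanLin (M ω) v⟫)) ∂P := by
  obtain ⟨s, hcard, hs1, hs2⟩ := aux_net (E := EuclideanSpace ℝ (Fin d))
  rw [finrank_euclideanSpace_fin] at hcard
  have hmeas : ∀ u : EuclideanSpace ℝ (Fin d), Measurable fun ω =>
      ENNReal.ofReal (g (2 * ⟪u, Matrix.toEuclideanLin (M ω) u⟫)) := by
    intro u
    have hentry : ∀ i j, Measurable fun ω => M ω i j := fun i j =>
      (measurable_pi_apply j).comp ((measurable_pi_apply i).comp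
        (show Measurable (fun ω => (M ω : Fin d → Fin d → ℝ)) from hMmeas))
    have hq : Measurable fun ω => ⟪u, Matrix.toEuclideanLin (M ω) u⟫ := by
      simp only [PiLp.inner_apply, Matrix.ofLp_toEuclideanLin_apply, Matrix.mulVec, dotProduct]
      simp only [RCLike.inner_apply]
      fun_prop
    exact (hgmeas.comp (hq.const_mul 2)).ennreal_ofReal
  calc _ ≤ ∫⁻ ω, ∑ u ∈ s, ENNReal.ofReal (g (2 * ⟪u, Matrix.toEuclideanLin (M ω) u⟫)) ∂P := by
        refine lintegral_mono_ae ?_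
        filter_upwards [hpsd] with ω hω
        obtain ⟨u, hu, hq⟩ := aux_quad (M ω) hω s hs2
        refine iSup_le fun v => ?_
        refine (ENNReal.ofReal_le_ofReal (hgmono (hq v (mem_closedBall_zero_iff.1 v.2)))).trans ?_
        exact Finset.single_le_sum
          (f := fun u => ENNReal.ofReal (g (2 * ⟪u, Matrix.toEuclideanLin (M ω) u⟫)))
          (fun _ _ => zero_le) hu
    _ = ∑ u ∈ s, ∫⁻ ω, ENNReal.ofReal (g (2 * ⟪u, Matrix.toEuclideanLin (M ω) u⟫)) ∂P :=
        lintegral_finsetSum _ fun u _ => hmeas u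
    _ ≤ s.card • ⨆ v : Metric.closedBall (0 : EuclideanSpace ℝ (Fin d)) 1,
          ∫⁻ ω, ENNReal.ofReal
            (g (2 * ⟪(v : EuclideanSpace ℝ (Fin d)), Matrix.toEuclideanLin (M ω) v⟫)) ∂P := by
        refine Finset.sum_le_card_nsmul _ _ _ fun u hu => ?_
        exact le_iSup (fun v : Metric.closedBall (0 : EuclideanSpace ℝ (Fin d)) 1 =>
          ∫⁻ ω, ENNReal.ofReal
            (g (2 * ⟪(v : EuclideanSpace ℝ (Fin d)), Matrix.toEuclideanLin (M ω) v⟫)) ∂P)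
          ⟨u, by simpa using hs1 u hu⟩
    _ ≤ _ := by
        rw [nsmul_eq_mul]
        gcongr
        exact_mod_cast hcard
end

section
/- Let n, f, q be integers with n > f ≥ q ≥ 0, let σ_cor, σ_ind ≥ 0 with b := (f − q) σ_cor² + σ_ind² > 0, and set a := (n − q) σ_cor² + σ_ind² and m := n − f. Then the m × m matrix Σ := a I_m − σ_cor² J_m is symmetric positive definite, and for every standard basis vector e_i of ℝ^m and every real C, (2C e_i)ᵀ Σ^{-1} (2C e_i) = (4C²/a) (1 + σ_cor²/b). -/
open scoped Matrix

theorem aux_posDef (m : ℕ) (a b c : ℝ) (hb : 0 < b) (hc : 0 ≤ c) (hab : a = b + m * c) :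
    (a • (1 : Matrix (Fin m) (Fin m) ℝ) - c • Matrix.of (fun _ _ => (1 : ℝ))).PosDef := by
  refine Matrix.PosDef.of_dotProduct_mulVec_pos ?_ ?_
  · ext i j
    simp [Matrix.one_apply, eq_comm]
  · intro x hx
    have h1 : star x ⬝ᵥ (a • (1 : Matrix (Fin m) (Fin m) ℝ)
        - c • Matrix.of (fun _ _ => (1 : ℝ))).mulVec x
        = a * ∑ i, x i ^ 2 - c * (∑ i, x i) ^ 2 := by
      rw [Matrix.sub_mulVec, Matrix.smul_mulVec, Matrix.smul_mulVec, Matrix.one_mulVec,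
        dotProduct_sub, dotProduct_smul, dotProduct_smul]
      simp [dotProduct, Matrix.mulVec, pow_two, Finset.sum_mul]
    rw [h1]
    have h2 : (∑ i, x i) ^ 2 ≤ (m : ℝ) * ∑ i, x i ^ 2 := by
      simpa using sq_sum_le_card_mul_sum_sq (s := Finset.univ) (f := x)
    have h3 : 0 < ∑ i, x i ^ 2 := by
      obtain ⟨i, hi⟩ := Function.ne_iff.mp hx
      refine Finset.sum_pos' (fun i _ => sq_nonneg _) ⟨i, Finset.mem_univ i, ?_⟩
      exact sq_pos_iff.mpr hi
    have h4 := mul_le_mul_of_nonneg_left h2 hc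
    have h5 := mul_pos hb h3
    rw [hab]
    nlinarith

theorem aux_inv (m : ℕ) (a b c : ℝ) (ha : a ≠ 0) (hb : b ≠ 0) (hab : a = b + m * c) :
    (a • (1 : Matrix (Fin m) (Fin m) ℝ) - c • Matrix.of (fun _ _ => (1 : ℝ)))⁻¹
      = a⁻¹ • (1 : Matrix (Fin m) (Fin m) ℝ) + (c / (a * b)) • Matrix.of (fun _ _ => (1 : ℝ)) := by
  apply Matrix.inv_eq_right_inv
  have hJ : (Matrix.of (fun _ _ => (1 : ℝ)) : Matrix (Fin m) (Fin m) ℝ)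
      * Matrix.of (fun _ _ => (1 : ℝ)) = (m : ℝ) • Matrix.of (fun _ _ => (1 : ℝ)) := by
    ext i j
    simp [Matrix.mul_apply]
  simp only [sub_mul, mul_add, smul_mul_assoc, mul_smul_comm, one_mul, mul_one, hJ]
  ext i j
  simp only [Matrix.sub_apply, Matrix.add_apply, Matrix.smul_apply, Matrix.of_apply, smul_eq_mul]
  field_simp
  rw [hab]
  ring

/-- The covariance matrix `Σ = a I_m − σ_cor² J_m` of the correlated-noise scheme (with
`a = (n − q) σ_cor² + σ_ind²`, `b = (f − q) σ_cor² + σ_ind² > 0`, `m = n − f`) is symmetric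
positive definite, and the quadratic form of its inverse at `2C e_i` equals
`(4C²/a)(1 + σ_cor²/b)`. -/
theorem stmt_11 (n f q : ℕ) (hqf : q ≤ f) (hfn : f < n)
    (σcor σind : ℝ) (hσcor : 0 ≤ σcor) (hσind : 0 ≤ σind)
    (hb : 0 < ((f : ℝ) - q) * σcor ^ 2 + σind ^ 2)
    (Sig : Matrix (Fin (n - f)) (Fin (n - f)) ℝ)
    (hSig : Sig = (((n : ℝ) - q) * σcor ^ 2 + σind ^ 2) • (1 : Matrix (Fin (n - f)) (Fin (n - f)) ℝ)
        - (σcor ^ 2) • Matrix.of (fun _ _ => (1 : ℝ))) :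
    Sig.PosDef ∧
      ∀ (i : Fin (n - f)) (C : ℝ),
        (fun j => (2 * C) * (Pi.single i (1 : ℝ) : Fin (n - f) → ℝ) j) ⬝ᵥ
            (Sig⁻¹).mulVec (fun j => (2 * C) * (Pi.single i (1 : ℝ) : Fin (n - f) → ℝ) j)
          = (4 * C ^ 2 / (((n : ℝ) - q) * σcor ^ 2 + σind ^ 2))
              * (1 + σcor ^ 2 / (((f : ℝ) - q) * σcor ^ 2 + σind ^ 2)) := by
  have hc := sq_nonneg σcor
  have hab : ((n : ℝ) - q) * σcor ^ 2 + σind ^ 2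
      = (((f : ℝ) - q) * σcor ^ 2 + σind ^ 2) + ((n - f : ℕ) : ℝ) * σcor ^ 2 := by
    rw [Nat.cast_sub hfn.le]
    ring
  generalize ((n : ℝ) - q) * σcor ^ 2 + σind ^ 2 = a at *
  generalize ((f : ℝ) - q) * σcor ^ 2 + σind ^ 2 = b at *
  have ha : 0 < a := by rw [hab]; positivity
  subst hSig
  refine ⟨aux_posDef _ a b _ hb hc hab, fun i C => ?_⟩
  rw [aux_inv _ a b _ ha.ne' hb.ne' hab]
  have hv : (fun j => (2 * C) * (Pi.single i (1 : ℝ) : Fin (n - f) → ℝ) j)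
      = (2 * C) • (Pi.single i (1 : ℝ) : Fin (n - f) → ℝ) := rfl
  rw [hv, Matrix.mulVec_smul, dotProduct_smul, smul_dotProduct, single_dotProduct,
    Matrix.mulVec_single_one]
  simp only [Matrix.col_apply, Matrix.add_apply, Matrix.smul_apply, Matrix.one_apply_eq,
    Matrix.of_apply, smul_eq_mul]
  field_simp
  ring
end

section
/- Fix reals L > 0, κ ≥ 0, P ≥ 0, Q ≥ 0, G ≥ 0, a step size γ with 0 < γ ≤ 1/(24L), and set β := 1 − 24Lγ. Suppose nonnegative reals u, v, w, G₀ (current values) and u', v', w' (next values) satisfy: (R1) u' ≤ u − (γ/2)(1 − 4γL) G₀ + γ(1 + 2γL) v + γ(1 + γL) κ w; (R2) v' ≤ β²(1 + γL)(1 + 4γL) v + 4γL(1 + γL) β² G₀ + (1 − β)² P + 2γL(1 + γL) β² κ w; (R3) w' ≤ β w + 2(1 − β)² Q + (1 − β) G². Then, with V := u + v/(16L) + 2κw/L and V' := u' + v'/(16L) + 2κw'/L, one has V' − V ≤ −(γ/10) G₀ − (γ/16) v − 12 κ γ w + 576 L γ² (P/16 + 4κQ) + 48 κ γ G². -/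
/-- One-step Lyapunov decrease of the CafCor analysis: combining the descent (R1),
momentum-deviation (R2) and momentum-drift (R3) recursions with
`V := u + v/(16L) + 2κw/L`. -/
theorem stmt_14 (L κ P Q G γ : ℝ) (hL : 0 < L) (hκ : 0 ≤ κ) (hP : 0 ≤ P) (hQ : 0 ≤ Q)
    (hG : 0 ≤ G) (hγ0 : 0 < γ) (hγ : γ ≤ 1 / (24 * L))
    (β : ℝ) (hβ : β = 1 - 24 * L * γ)
    (u v w G₀ u' v' w' : ℝ)
    (hu : 0 ≤ u) (hv : 0 ≤ v) (hw : 0 ≤ w) (hG₀ : 0 ≤ G₀)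
    (hu' : 0 ≤ u') (hv' : 0 ≤ v') (hw' : 0 ≤ w')
    (hR1 : u' ≤ u - (γ / 2) * (1 - 4 * γ * L) * G₀ + γ * (1 + 2 * γ * L) * v
      + γ * (1 + γ * L) * κ * w)
    (hR2 : v' ≤ β ^ 2 * (1 + γ * L) * (1 + 4 * γ * L) * v
      + 4 * γ * L * (1 + γ * L) * β ^ 2 * G₀ + (1 - β) ^ 2 * P
      + 2 * γ * L * (1 + γ * L) * β ^ 2 * κ * w)
    (hR3 : w' ≤ β * w + 2 * (1 - β) ^ 2 * Q + (1 - β) * G ^ 2) :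
    (u' + v' / (16 * L) + 2 * κ * w' / L) - (u + v / (16 * L) + 2 * κ * w / L)
      ≤ -(γ / 10) * G₀ - (γ / 16) * v - 12 * κ * γ * w
        + 576 * L * γ ^ 2 * (P / 16 + 4 * κ * Q) + 48 * κ * γ * G ^ 2 := by
  obtain ⟨x, hx⟩ : ∃ x, x = γ * L := ⟨_, rfl⟩
  have hx0 : 0 < x := by rw [hx]; positivity
  have hx1 : x ≤ 1 / 24 := by
    rw [le_div_iff₀ (by positivity)] at hγ
    rw [hx]; linarith
  have hβx : β = 1 - 24 * x := by rw [hβ, hx]; ring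
  have hb0 : 0 ≤ β := by linarith
  have hb1 : β ≤ 1 := by linarith
  have hb2 : β ^ 2 ≤ β := by nlinarith
  -- coefficient of `G₀`
  have c1 : -(1 / 2) * (1 - 4 * x) + (1 / 4) * ((1 + x) * β ^ 2) ≤ -(1 / 10) := by
    have : (1 + x) * β ^ 2 ≤ (1 + x) * β := by gcongr
    rw [hβx] at this ⊢
    nlinarith
  -- coefficient of `v`
  have c2 : β ^ 2 * (1 + x) * (1 + 4 * x) - 1 + 16 * x * (1 + 2 * x) + x ≤ 0 := by
    have h : β ^ 2 * ((1 + x) * (1 + 4 * x)) ≤ β * ((1 + x) * (1 + 4 * x)) := by gcongr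
    have h3 : 0 < x ^ 3 := by positivity
    rw [hβx] at h ⊢
    nlinarith
  -- coefficient of `w`
  have c3 : (1 + x) + (1 / 8) * ((1 + x) * β ^ 2) - 48 ≤ -12 := by
    have : (1 + x) * β ^ 2 ≤ (1 + x) * 1 := by gcongr; linarith
    linarith
  have m1 := mul_le_mul_of_nonneg_right c1 (by positivity : 0 ≤ γ * G₀)
  have m2 := mul_le_mul_of_nonneg_right c2 (by positivity : 0 ≤ v / (16 * L))
  have m3 := mul_le_mul_of_nonneg_right c3 (by positivity : 0 ≤ γ * κ * w)
  have r2 := mul_le_mul_of_nonneg_right hR2 (by positivity : 0 ≤ 1 / (16 * L))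
  have r3 := mul_le_mul_of_nonneg_right hR3 (by positivity : 0 ≤ 2 * κ / L)
  have e1 : (β ^ 2 * (1 + γ * L) * (1 + 4 * γ * L) * v
      + 4 * γ * L * (1 + γ * L) * β ^ 2 * G₀ + (1 - β) ^ 2 * P
      + 2 * γ * L * (1 + γ * L) * β ^ 2 * κ * w) * (1 / (16 * L))
      = β ^ 2 * (1 + x) * (1 + 4 * x) * (v / (16 * L)) + (1 / 4) * ((1 + x) * β ^ 2) * (γ * G₀)
        + 576 * L * γ ^ 2 * (P / 16) + (1 / 8) * ((1 + x) * β ^ 2) * (γ * κ * w) := by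
    have : (1 - β) ^ 2 = 576 * L ^ 2 * γ ^ 2 := by rw [hβ]; ring
    rw [this, hx]; field_simp; ring
  have e2 : (β * w + 2 * (1 - β) ^ 2 * Q + (1 - β) * G ^ 2) * (2 * κ / L)
      = 2 * κ * w / L - 48 * (γ * κ * w) + 576 * L * γ ^ 2 * (4 * κ * Q)
        + 48 * κ * γ * G ^ 2 := by
    rw [hβ]; field_simp; ring
  have e3 : (16 * x * (1 + 2 * x) + x) * (v / (16 * L))
      = γ * (1 + 2 * γ * L) * v + γ / 16 * v := by
    rw [hx]; field_simp
  have e4 : v' * (1 / (16 * L)) = v' / (16 * L) := by ring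
  have e5 : w' * (2 * κ / L) = 2 * κ * w' / L := by ring
  have e6 : (γ / 2) * (1 - 4 * γ * L) * G₀ = (1 / 2) * (1 - 4 * x) * (γ * G₀) := by
    rw [hx]; ring
  have e7 : γ * (1 + γ * L) * κ * w = (1 + x) * (γ * κ * w) := by rw [hx]; ring
  rw [e1, e4] at r2
  rw [e2, e5] at r3
  rw [e6, e7] at hR1
  linarith
end

section
/- Fix reals L > 0, 0 < μ ≤ L, κ ≥ 0, P ≥ 0, Q ≥ 0, G ≥ 0, an integer T ≥ 1, and nonnegative real sequences (u_t), (v_t), (w_t), (G_t) for t = 0, …, T with w_0 = 0, v_0 ≤ 2L u_0, and G_t ≥ 2μ u_t for all t. Define γ_t := 10/(μ(t + 240 L/μ)) and β_t := 1 − 24 L γ_t, and suppose that for every t < T: (R1) u_{t+1} ≤ u_t − (γ_t/2)(1 − 4γ_t L) G_t + γ_t (1 + 2γ_t L) v_t + γ_t (1 + γ_t L) κ w_t; (R2) v_{t+1} ≤ β_t²(1 + γ_t L)(1 + 4γ_t L) v_t + 4γ_t L (1 + γ_t L) β_t² G_t + (1 − β_t)² P + 2γ_t L (1 + γ_t L)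 β_t² κ w_t; (R3) w_{t+1} ≤ β_t w_t + 2(1 − β_t)² Q + (1 − β_t) G². Then, setting σ̄² := P + 4κQ, one has u_T ≤ 960 κ G² / μ + 115200 L σ̄² / (μ² T) + 115200 L² u_0 / (μ² T²). -/
/-- One step of the Lyapunov recursion (`x = γ L`, `g = γ`, `W = κ w`). -/
lemma lyap_step (L μ P q H x g u v W Gt u' v' W' : ℝ) (hL : 0 < L) (hμL : μ ≤ L) (hμ0 : 0 < μ)
    (hx : x = g * L) (hg : 0 < g) (hx1 : x ≤ 1 / 24) (hq : 0 ≤ q)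
    (hv : 0 ≤ v) (hW : 0 ≤ W) (hGt : 0 ≤ Gt) (hPL : 2 * μ * u ≤ Gt)
    (h1 : u' ≤ u - (g / 2) * (1 - 4 * x) * Gt + g * (1 + 2 * x) * v + g * (1 + x) * W)
    (h2 : v' ≤ (1 - 24 * x) ^ 2 * (1 + x) * (1 + 4 * x) * v
      + 4 * x * (1 + x) * (1 - 24 * x) ^ 2 * Gt + (24 * x) ^ 2 * P
      + 2 * x * (1 + x) * (1 - 24 * x) ^ 2 * W)
    (h3 : W' ≤ (1 - 24 * x) * W + 2 * (24 * x) ^ 2 * q + 24 * x * H) :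
    L * u' + v' / 16 + W' / 16 ≤ (1 - g * μ / 2) * (L * u + v / 16 + W / 16)
      + 36 * x ^ 2 * (P + 4 * q) + 3 / 2 * x * H := by
  have hx0 : 0 < x := by rw [hx]; positivity
  have hy : g * μ / 2 ≤ x / 2 := by rw [hx]; nlinarith
  have hb0 : 0 ≤ 1 - 24 * x := by linarith
  have e1 : (1 - 24 * x) * (1 + x) ≤ 1 := by nlinarith
  have e2 : (1 - 24 * x) * ((1 + x) * (1 + 4 * x)) ≤ 1 := by nlinarith [sq_nonneg x]
  have b1 : (1 - 24 * x) ^ 2 * (1 + x) ≤ 1 - 24 * x := by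
    nlinarith [mul_le_mul_of_nonneg_left e1 hb0]
  have b2 : (1 - 24 * x) ^ 2 * (1 + x) * (1 + 4 * x) ≤ 1 - 24 * x := by
    nlinarith [mul_le_mul_of_nonneg_left e2 hb0]
  have h1L : L * u' ≤ L * u - (x / 2) * (1 - 4 * x) * Gt + x * (1 + 2 * x) * v
      + x * (1 + x) * W := by
    have := mul_le_mul_of_nonneg_left h1 hL.le
    rw [hx] at *
    linarith
  have cG : -(x / 2) * (1 - 4 * x) + (4 * x * (1 + x) * (1 - 24 * x) ^ 2) / 16 ≤ - (x / 4) := by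
    nlinarith [mul_le_mul_of_nonneg_left b1 hx0.le]
  have cv : x * (1 + 2 * x) + ((1 - 24 * x) ^ 2 * (1 + x) * (1 + 4 * x)) / 16
      ≤ (1 - g * μ / 2) / 16 := by
    nlinarith
  have cW : x * (1 + x) + (2 * x * (1 + x) * (1 - 24 * x) ^ 2) / 16 + (1 - 24 * x) / 16
      ≤ (1 - g * μ / 2) / 16 := by
    nlinarith [mul_le_mul_of_nonneg_left b1 hx0.le]
  have mG := mul_le_mul_of_nonneg_right cG hGt
  have mv := mul_le_mul_of_nonneg_right cv hv
  have mW := mul_le_mul_of_nonneg_right cW hW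
  have mP : x / 4 * (2 * μ * u) ≤ x / 4 * Gt := mul_le_mul_of_nonneg_left hPL (by positivity)
  have mP' : x / 4 * (2 * μ * u) = g * μ / 2 * (L * u) := by rw [hx]; ring
  have hxq : 0 ≤ x ^ 2 * q := by positivity
  linarith

/-- Solving the scalar recursion, one step. -/
lemma scalar_step (s A B C V V' : ℝ) (hs : 5 ≤ s) (hB : 0 ≤ B) (hC : 0 ≤ C)
    (hV : V ≤ A + B / s + C / s ^ 2)
    (h : V' ≤ (1 - 5 / s) * V + 4 * B / s ^ 2 + 5 * A / s) :
    V' ≤ A + B / (s + 1) + C / (s + 1) ^ 2 := by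
  have hs0 : 0 < s := by linarith
  have h5 : 0 ≤ 1 - 5 / s := by
    rw [sub_nonneg, div_le_one hs0]; exact hs
  have m := mul_le_mul_of_nonneg_left hV h5
  have k1 : (1 - 5 / s) * (1 / s) + 4 / s ^ 2 ≤ 1 / (s + 1) := by
    have : (1 - 5 / s) * (1 / s) + 4 / s ^ 2 = (s - 1) / s ^ 2 := by field_simp; ring
    rw [this, div_le_div_iff₀ (by positivity) (by positivity)]
    nlinarith
  have k2 : (1 - 5 / s) * (1 / s ^ 2) ≤ 1 / (s + 1) ^ 2 := by
    have : (1 - 5 / s) * (1 / s ^ 2) = (s - 5) / s ^ 3 := by field_simp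
    rw [this, div_le_div_iff₀ (by positivity) (by positivity)]
    nlinarith
  have m1 := mul_le_mul_of_nonneg_left k1 hB
  have m2 := mul_le_mul_of_nonneg_left k2 hC
  have : (1 - 5 / s) * (A + B / s + C / s ^ 2) + 4 * B / s ^ 2 + 5 * A / s
      = A + B * ((1 - 5 / s) * (1 / s) + 4 / s ^ 2) + C * ((1 - 5 / s) * (1 / s ^ 2)) := by
    field_simp; ring
  have r1 : B * (1 / (s + 1)) = B / (s + 1) := by ring
  have r2 : C * (1 / (s + 1) ^ 2) = C / (s + 1) ^ 2 := by ring
  linarith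

/-- Convergence of the CafCor recursions in the strongly convex case: with the step sizes
`γ t = 10/(μ(t + 240 L/μ))` and momentum `β t = 1 − 24 L γ t`, the recursions (R1)–(R3)
together with the PL inequality `G t ≥ 2 μ u t` yield
`u T ≤ 960 κ G²/μ + 115200 L σ̄²/(μ² T) + 115200 L² u 0/(μ² T²)` where `σ̄² = P + 4κQ`. -/
theorem stmt_15 (L μ κ P Q G : ℝ) (hL : 0 < L) (hμ0 : 0 < μ) (hμL : μ ≤ L)
    (hκ : 0 ≤ κ) (hP : 0 ≤ P) (hQ : 0 ≤ Q) (hG : 0 ≤ G)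
    (T : ℕ) (hT : 1 ≤ T)
    (u v w Gs : ℕ → ℝ)
    (hu : ∀ t ≤ T, 0 ≤ u t) (hv : ∀ t ≤ T, 0 ≤ v t) (hw : ∀ t ≤ T, 0 ≤ w t)
    (hGs : ∀ t ≤ T, 0 ≤ Gs t)
    (hw0 : w 0 = 0) (hv0 : v 0 ≤ 2 * L * u 0)
    (hPL : ∀ t ≤ T, 2 * μ * u t ≤ Gs t)
    (γ β : ℕ → ℝ)
    (hγ : ∀ t, γ t = 10 / (μ * ((t : ℝ) + 240 * L / μ)))
    (hβ : ∀ t, β t = 1 - 24 * L * γ t)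
    (hR1 : ∀ t < T, u (t + 1) ≤ u t - (γ t / 2) * (1 - 4 * γ t * L) * Gs t
      + γ t * (1 + 2 * γ t * L) * v t + γ t * (1 + γ t * L) * κ * w t)
    (hR2 : ∀ t < T, v (t + 1) ≤ (β t) ^ 2 * (1 + γ t * L) * (1 + 4 * γ t * L) * v t
      + 4 * γ t * L * (1 + γ t * L) * (β t) ^ 2 * Gs t + (1 - β t) ^ 2 * P
      + 2 * γ t * L * (1 + γ t * L) * (β t) ^ 2 * κ * w t)
    (hR3 : ∀ t < T, w (t + 1) ≤ β t * w t + 2 * (1 - β t) ^ 2 * Q + (1 - β t) * G ^ 2) :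
    u T ≤ 960 * κ * G ^ 2 / μ + 115200 * L * (P + 4 * κ * Q) / (μ ^ 2 * T)
      + 115200 * L ^ 2 * u 0 / (μ ^ 2 * (T : ℝ) ^ 2) := by
  set s : ℕ → ℝ := fun t => (t : ℝ) + 240 * L / μ with hs
  have hr : 240 ≤ 240 * L / μ := by
    rw [le_div_iff₀ hμ0]; linarith
  have hs240 : ∀ t, 240 ≤ s t := fun t => by
    have : (0 : ℝ) ≤ t := t.cast_nonneg
    simp only [hs]; linarith
  have hγs : ∀ t, γ t = 10 / (μ * s t) := hγ
  set A : ℝ := L * (3 * (κ * G ^ 2) / μ) with hA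
  set B : ℝ := L * (900 * L * (P + 4 * κ * Q) / μ ^ 2) with hB
  set C : ℝ := L * (64800 * L ^ 2 * u 0 / μ ^ 2) with hC
  have hu0 := hu 0 (Nat.zero_le _)
  have hA0 : 0 ≤ A := by positivity
  have hB0 : 0 ≤ B := by positivity
  have hC0 : 0 ≤ C := by positivity
  have key : ∀ t ≤ T, L * u t + v t / 16 + (κ * w t) / 16 ≤ A + B / s t + C / s t ^ 2 := by
    intro t
    induction t with
    | zero =>
      intro _
      have hs0 : s 0 = 240 * L / μ := by simp [hs]
      have hCC : C / s 0 ^ 2 = 9 / 8 * L * u 0 := by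
        rw [hs0, hC]; field_simp; ring
      have : 0 ≤ B / s 0 := div_nonneg hB0 (by linarith [hs240 0])
      rw [hCC, hw0]; linarith
    | succ t ih =>
      intro ht
      have htT : t < T := ht
      have hst := hs240 t
      have hsp : 0 < s t := by linarith
      have hg : 0 < γ t := by rw [hγs]; positivity
      have hss : s (t + 1) = s t + 1 := by simp only [hs]; push_cast; ring
      rw [hss]
      refine scalar_step (s t) A B C _ _ (by linarith) hB0 hC0 (ih htT.le) ?_
      have hx1 : γ t * L ≤ 1 / 24 := by
        have h0 : 240 * L / μ ≤ s t := by
          have : (0 : ℝ) ≤ t := t.cast_nonneg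
          simp only [hs]; linarith
        rw [div_le_iff₀ hμ0] at h0
        rw [hγs, div_mul_eq_mul_div, div_le_div_iff₀ (by positivity) (by norm_num)]
        linarith
      have r1 := hR1 t htT
      have r2 := hR2 t htT
      have r3 := mul_le_mul_of_nonneg_left (hR3 t htT) hκ
      rw [hβ] at r2 r3
      have := lyap_step L μ P (κ * Q) (κ * G ^ 2) (γ t * L) (γ t) (u t) (v t) (κ * w t) (Gs t)
        (u (t + 1)) (v (t + 1)) (κ * w (t + 1)) hL hμL hμ0 rfl hg hx1 (by positivity)
        (hv t htT.le) (mul_nonneg hκ (hw t htT.le)) (hGs t htT.le) (hPL t htT.le)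
        (by linarith) (by linarith) (by linarith)
      refine this.trans (le_of_eq ?_)
      rw [hγs, hA, hB]
      field_simp
      ring
  have hTT := key T le_rfl
  have hT0 : (0 : ℝ) < T := by exact_mod_cast hT
  have hTs : (T : ℝ) ≤ s T := by simp only [hs]; linarith
  have f1 : B / s T ≤ B / T := div_le_div_of_nonneg_left hB0 hT0 hTs
  have f2 : C / s T ^ 2 ≤ C / (T : ℝ) ^ 2 :=
    div_le_div_of_nonneg_left hC0 (by positivity) (by gcongr)
  have f3 := hv T le_rfl
  have f4 := mul_nonneg hκ (hw T le_rfl)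
  have fin : L * u T ≤ L * (3 * (κ * G ^ 2 / μ) + 900 * (L * (P + 4 * κ * Q) / (μ ^ 2 * T))
      + 64800 * (L ^ 2 * u 0 / (μ ^ 2 * (T : ℝ) ^ 2))) := by
    have : L * (3 * (κ * G ^ 2 / μ) + 900 * (L * (P + 4 * κ * Q) / (μ ^ 2 * T))
      + 64800 * (L ^ 2 * u 0 / (μ ^ 2 * (T : ℝ) ^ 2))) = A + B / T + C / (T : ℝ) ^ 2 := by
      rw [hA, hB, hC]; field_simp
    rw [this]; linarith
  have fin' := le_of_mul_le_mul_left fin hL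
  have g1 : 0 ≤ κ * G ^ 2 / μ := by positivity
  have g2 : 0 ≤ L * (P + 4 * κ * Q) / (μ ^ 2 * T) := by positivity
  have g3 : 0 ≤ L ^ 2 * u 0 / (μ ^ 2 * (T : ℝ) ^ 2) := by positivity
  have q1 : 960 * κ * G ^ 2 / μ = 960 * (κ * G ^ 2 / μ) := by ring
  have q2 : 115200 * L * (P + 4 * κ * Q) / (μ ^ 2 * T)
      = 115200 * (L * (P + 4 * κ * Q) / (μ ^ 2 * T)) := by ring
  have q3 : 115200 * L ^ 2 * u 0 / (μ ^ 2 * (T : ℝ) ^ 2)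
      = 115200 * (L ^ 2 * u 0 / (μ ^ 2 * (T : ℝ) ^ 2)) := by ring
  rw [q1, q2, q3]
  linarith
end

section
/- Fix reals L > 0, κ ≥ 0, P ≥ 0, Q ≥ 0, G ≥ 0, an integer T ≥ 1, and nonnegative real sequences (u_t), (v_t), (w_t), (G_t) for t = 0, …, T with w_0 = 0, v_0 ≤ 2L u_0, and u_0 > 0. Set σ̄ := √(P + 4κQ) and assume σ̄ > 0. Define the constant step size γ := min{ 1/(24L), √(270 u_0) / (2 σ̄ √(5760 L T)) } and β := 1 − 24Lγ, and suppose that for every t < T: (R1) u_{t+1} ≤ u_t − (γ/2)(1 − 4γL) G_t + γ(1 + 2γL) v_t + γ(1 + γL) κ w_t; (R2) v_{t+1} ≤ β²(1 + γL)(1 + 4γL) v_t + 4γL(1 + γL) β² G_t + (1 − β)² P + 2γL(1 + γL) β² κ w_t; (R3) w_{t+1} ≤ β w_t + 2(1 − β)² Q + (1 − β) G². Then (1/T) Σ_{t=0}^{T−1} G_t ≤ 480 κ G² + √(1555200 L u_0) · σ̄ / √T + 270 L u_0 / T. -/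
theorem cafcor_coef (x β : ℝ) (hx0 : 0 < x) (hx1 : x ≤ 1 / 24) (hβx : β = 1 - 24 * x) :
    x * (1 + 2 * x) + β ^ 2 * (1 + x) * (1 + 4 * x) / 20 ≤ 1 / 20 ∧
    4 * x * (1 + x) * β ^ 2 / 20 + 29 / 100 * x ≤ (x / 2) * (1 - 4 * x) ∧
    x * (1 + x) + 2 * x * (1 + x) * β ^ 2 / 20 + (1 - 24 * x) / 20 ≤ 1 / 20 := by
  have hβ0 : 0 ≤ β := by rw [hβx]; linarith
  have hxx : x * x ≤ x * (1 / 24) := mul_le_mul_of_nonneg_left hx1 hx0.le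
  have hxx0 : 0 ≤ x * x := by positivity
  have hxxx0 : 0 ≤ x * x * x := by positivity
  have h1 : β * ((1 + x) * (1 + 4 * x)) ≤ 1 := by
    have : β * ((1 + x) * (1 + 4 * x)) = 1 - 19 * x - 116 * (x * x) - 96 * (x * x * x) := by
      rw [hβx]; ring
    linarith
  have h2 : β ^ 2 * (1 + x) * (1 + 4 * x) ≤ 1 - 24 * x := by
    calc β ^ 2 * (1 + x) * (1 + 4 * x) = β * (β * ((1 + x) * (1 + 4 * x))) := by ring
      _ ≤ β * 1 := mul_le_mul_of_nonneg_left h1 hβ0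
      _ = 1 - 24 * x := by rw [hβx]; ring
  have h3 : (1 + x) * β ^ 2 ≤ 1 - 23 * x := by
    have : (1 + x) * β ^ 2 = β * (1 - 23 * x - 24 * (x * x)) := by rw [hβx]; ring
    rw [this]
    calc β * (1 - 23 * x - 24 * (x * x)) ≤ β * 1 :=
          mul_le_mul_of_nonneg_left (by linarith) hβ0
      _ ≤ 1 - 23 * x := by rw [hβx]; linarith
  have h4 := mul_le_mul_of_nonneg_left h3 hx0.le
  refine ⟨?_, ?_, ?_⟩ <;> linarith


/-- Convergence of the CafCor recursions in the non-convex case: with the constant step size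
`γ = min{1/(24L), √(270 u₀)/(2 σ̄ √(5760 L T))}` and momentum `β = 1 − 24Lγ`, the recursions
(R1)–(R3) yield `(1/T) ∑_{t<T} G t ≤ 480 κ G² + √(1555200 L u₀) σ̄/√T + 270 L u₀/T`, where
`σ̄ = √(P + 4κQ)`. -/
theorem stmt_16 (L κ P Q G : ℝ) (hL : 0 < L) (hκ : 0 ≤ κ) (hP : 0 ≤ P) (hQ : 0 ≤ Q)
    (hG : 0 ≤ G) (T : ℕ) (hT : 1 ≤ T)
    (u v w Gs : ℕ → ℝ)
    (hu : ∀ t ≤ T, 0 ≤ u t) (hv : ∀ t ≤ T, 0 ≤ v t) (hw : ∀ t ≤ T, 0 ≤ w t)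
    (hGs : ∀ t ≤ T, 0 ≤ Gs t)
    (hw0 : w 0 = 0) (hv0 : v 0 ≤ 2 * L * u 0) (hu0 : 0 < u 0)
    (σbar : ℝ) (hσbar : σbar = Real.sqrt (P + 4 * κ * Q)) (hσbar0 : 0 < σbar)
    (γ β : ℝ)
    (hγ : γ = min (1 / (24 * L))
      (Real.sqrt (270 * u 0) / (2 * σbar * Real.sqrt (5760 * L * T))))
    (hβ : β = 1 - 24 * L * γ)
    (hR1 : ∀ t < T, u (t + 1) ≤ u t - (γ / 2) * (1 - 4 * γ * L) * Gs t
      + γ * (1 + 2 * γ * L) * v t + γ * (1 + γ * L) * κ * w t)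
    (hR2 : ∀ t < T, v (t + 1) ≤ β ^ 2 * (1 + γ * L) * (1 + 4 * γ * L) * v t
      + 4 * γ * L * (1 + γ * L) * β ^ 2 * Gs t + (1 - β) ^ 2 * P
      + 2 * γ * L * (1 + γ * L) * β ^ 2 * κ * w t)
    (hR3 : ∀ t < T, w (t + 1) ≤ β * w t + 2 * (1 - β) ^ 2 * Q + (1 - β) * G ^ 2) :
    (1 / T : ℝ) * ∑ t ∈ Finset.range T, Gs t
      ≤ 480 * κ * G ^ 2 + Real.sqrt (1555200 * L * u 0) * σbar / Real.sqrt T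
        + 270 * L * u 0 / T := by
  have hσ2 : σbar ^ 2 = P + 4 * κ * Q := by
    rw [hσbar]; exact Real.sq_sqrt (by positivity)
  have hT0 : (0 : ℝ) < T := by exact_mod_cast hT
  obtain ⟨S, hS⟩ : ∃ S, S = Real.sqrt (T : ℝ) := ⟨_, rfl⟩
  obtain ⟨p, hp⟩ : ∃ p, p = Real.sqrt (270 * u 0) := ⟨_, rfl⟩
  obtain ⟨q, hq⟩ : ∃ q, q = Real.sqrt (5760 * L) := ⟨_, rfl⟩
  have hS0 : 0 < S := by rw [hS]; positivity
  have hp0 : 0 < p := by rw [hp]; positivity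
  have hq0 : 0 < q := by rw [hq]; positivity
  have hS2 : S ^ 2 = T := by rw [hS]; exact Real.sq_sqrt (by positivity)
  have hp2 : p ^ 2 = 270 * u 0 := by rw [hp]; exact Real.sq_sqrt (by positivity)
  have hq2 : q ^ 2 = 5760 * L := by rw [hq]; exact Real.sq_sqrt (by positivity)
  have hqS : Real.sqrt (5760 * L * T) = q * S := by
    rw [hq, hS]; exact Real.sqrt_mul (by positivity) _
  have hpq : Real.sqrt (1555200 * L * u 0) = p * q := by
    rw [show 1555200 * L * u 0 = (p * q) ^ 2 by rw [mul_pow, hp2, hq2]; ring]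
    exact Real.sqrt_sq (by positivity)
  rw [hqS, ← hp] at hγ
  rw [hpq, ← hS]
  obtain ⟨g2, hg2⟩ : ∃ g, g = p / (2 * σbar * (q * S)) := ⟨_, rfl⟩
  have hg20 : 0 < g2 := by rw [hg2]; positivity
  rw [← hg2] at hγ
  have hγ0 : 0 < γ := by rw [hγ]; exact lt_min (by positivity) hg20
  have hγ1 : γ ≤ 1 / (24 * L) := by rw [hγ]; exact min_le_left _ _
  have hγ2 : γ ≤ g2 := by rw [hγ]; exact min_le_right _ _
  have hγinv : 1 / γ ≤ 24 * L + 1 / g2 := by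
    have h1 : 0 < 1 / g2 := by positivity
    rcases min_choice (1 / (24 * L)) g2 with h | h
    · rw [hγ, h, one_div_one_div]; linarith
    · rw [hγ, h]; linarith
  obtain ⟨x, hx⟩ : ∃ x, x = γ * L := ⟨_, rfl⟩
  have hx0 : 0 < x := by rw [hx]; positivity
  have hx1 : x ≤ 1 / 24 := by
    rw [hx]
    calc γ * L ≤ 1 / (24 * L) * L := by gcongr
      _ = 1 / 24 := by field_simp
  have hβx : β = 1 - 24 * x := by rw [hβ, hx]; ring
  have hβ0 : 0 ≤ β := by rw [hβx]; linarith
  have hβ1 : β ≤ 1 := by rw [hβx]; linarith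
  have hβsq : β ^ 2 ≤ β := by nlinarith
  -- one-step Lyapunov decrease, scaled by L
  have key : ∀ t < T, L * u (t + 1) + v (t + 1) / 20 + κ * w (t + 1) / 20
      ≤ L * u t + v t / 20 + κ * w t / 20 - 29 / 100 * x * Gs t
        + (144 / 5 * x ^ 2 * σbar ^ 2 + 6 / 5 * x * κ * G ^ 2) := by
    intro t ht
    have r1 := mul_le_mul_of_nonneg_left (hR1 t ht) hL.le
    have r2 := hR2 t ht
    have r3 := mul_le_mul_of_nonneg_left (hR3 t ht) hκ
    have e1 : L * (u t - (γ / 2) * (1 - 4 * γ * L) * Gs t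
      + γ * (1 + 2 * γ * L) * v t + γ * (1 + γ * L) * κ * w t)
      = L * u t - (x / 2) * (1 - 4 * x) * Gs t
      + x * (1 + 2 * x) * v t + x * (1 + x) * (κ * w t) := by rw [hx]; ring
    have e2 : β ^ 2 * (1 + γ * L) * (1 + 4 * γ * L) * v t
      + 4 * γ * L * (1 + γ * L) * β ^ 2 * Gs t + (1 - β) ^ 2 * P
      + 2 * γ * L * (1 + γ * L) * β ^ 2 * κ * w t
      = β ^ 2 * (1 + x) * (1 + 4 * x) * v t
      + 4 * x * (1 + x) * β ^ 2 * Gs t + 576 * x ^ 2 * P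
      + 2 * x * (1 + x) * β ^ 2 * (κ * w t) := by rw [hβx, hx]; ring
    have e3 : κ * (β * w t + 2 * (1 - β) ^ 2 * Q + (1 - β) * G ^ 2)
      = (1 - 24 * x) * (κ * w t) + 1152 * x ^ 2 * (κ * Q) + 24 * x * (κ * G ^ 2) := by
        rw [hβx]; ring
    rw [e1] at r1; rw [e2] at r2; rw [e3] at r3
    obtain ⟨cv, cg, cw⟩ := cafcor_coef x β hx0 hx1 hβx
    have kw : 0 ≤ κ * w t := mul_nonneg hκ (hw t ht.le)
    have m1 := mul_le_mul_of_nonneg_right cv (hv t ht.le)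
    have m2 := mul_le_mul_of_nonneg_right cg (hGs t ht.le)
    have m3 := mul_le_mul_of_nonneg_right cw kw
    have m4 : 0 ≤ x ^ 2 * (κ * Q) := by positivity
    rw [hσ2]
    linarith
  have tele : ∀ n ≤ T, L * u n + v n / 20 + κ * w n / 20
      + 29 / 100 * x * ∑ t ∈ Finset.range n, Gs t
      ≤ 11 / 10 * L * u 0 + n * (144 / 5 * x ^ 2 * σbar ^ 2 + 6 / 5 * x * κ * G ^ 2) := by
    intro n
    induction n with
    | zero => intro _; simp [hw0]; linarith
    | succ k ih =>
      intro hk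
      have h1 := ih (by omega)
      have h2 := key k (by omega)
      rw [Finset.sum_range_succ]; push_cast
      linarith
  have fin := tele T le_rfl
  have hn1 : 0 ≤ L * u T := mul_nonneg hL.le (hu T le_rfl)
  have hn2 := hv T le_rfl
  have hn3 : 0 ≤ κ * w T := mul_nonneg hκ (hw T le_rfl)
  obtain ⟨Z, hZ⟩ : ∃ Z, Z = ∑ t ∈ Finset.range T, Gs t := ⟨_, rfl⟩
  rw [← hZ] at fin ⊢
  have b1 : 29 / 100 * x * Z ≤ 11 / 10 * L * u 0
      + T * (144 / 5 * x ^ 2 * σbar ^ 2 + 6 / 5 * x * κ * G ^ 2) := by linarith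
  have b2 : (1 / T : ℝ) * Z ≤ 4 * u 0 / T * (1 / γ) + 100 * L * γ * σbar ^ 2
      + 5 * κ * G ^ 2 := by
    have hc : 0 < 29 / 100 * x * T := by positivity
    refine le_of_mul_le_mul_left ?_ hc
    have l1 : 29 / 100 * x * T * (1 / T * Z) = 29 / 100 * x * Z := by field_simp
    have l2 : 29 / 100 * x * T * (4 * u 0 / T * (1 / γ) + 100 * L * γ * σbar ^ 2
      + 5 * κ * G ^ 2) = 116 / 100 * (L * u 0) + 29 * (T * (x ^ 2 * σbar ^ 2))
        + 145 / 100 * (T * (x * κ * G ^ 2)) := by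
      rw [hx]; field_simp
      ring
    rw [l1, l2]
    have n1 : 0 ≤ L * u 0 := by positivity
    have n2 : 0 ≤ (T : ℝ) * (x ^ 2 * σbar ^ 2) := by positivity
    have n3 : 0 ≤ (T : ℝ) * (x * κ * G ^ 2) := by positivity
    linarith
  have b3 : 4 * u 0 / T * (1 / γ) ≤ 4 * u 0 / T * (24 * L + 1 / g2) := by gcongr
  have b4 : 100 * L * γ * σbar ^ 2 ≤ 100 * L * g2 * σbar ^ 2 := by gcongr
  have hu0e : u 0 = p ^ 2 / 270 := by linarith
  have hLe : L = q ^ 2 / 5760 := by linarith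
  have b5 : 4 * u 0 / T * (24 * L + 1 / g2)
      = 96 * (L * u 0 / T) + 8 / 270 * (p * q * σbar / S) := by
    rw [hg2, ← hS2, hu0e]; field_simp
    ring
  have b6 : 100 * L * g2 * σbar ^ 2 = 100 / 11520 * (p * q * σbar / S) := by
    rw [hg2, hLe]; field_simp
    ring
  have n1 : 0 ≤ L * u 0 / T := by positivity
  have n2 : 0 ≤ p * q * σbar / S := by positivity
  have n3 : 0 ≤ κ * G ^ 2 := by positivity
  have e : 270 * L * u 0 / T = 270 * (L * u 0 / T) := by ring
  rw [e]
  linarith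
end
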